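/- The infinite product ∏_{k=2}^{∞} (2^{k−1}+1)^{e^{−k}/(k−1)!} converges, and 2^{1 + e^{−1} − e^{1/e − 1} − e^{1/e − 2}} · ∏_{k=2}^{∞} (2^{k−1}+1)^{e^{−k}/(k−1)!} < 1.89756. Moreover, ∑_{k=2}^{∞} k·e^{−k}/(k−1)! = e^{1/e−1} + e^{1/e−2} − e^{−1}. -/

import Mathlib

/-!
Put `w k = e^{-k}/(k-1)!` for `k ≥ 2`. The exponent of `2` in front of the product is
`1 - ∑ k * w k`. Distributing `2^{-∑ k * w k}` over the factors turns the quantity into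
`2 * ∏ ((2^{k-1}+1) / 2^k)^{w k}`, a product of numbers at most `1`. Every partial product is
therefore an upper bound, with no tail to estimate, and the one over `2 ≤ k ≤ 6` is already below
`1.89756`.
-/

/-- The factor `(2^{k-1}+1)^{e^{-k}/(k-1)!}` for `k ≥ 2`, and `1` for `k < 2`. -/
noncomputable def starFactor (k : ℕ) : ℝ :=
  if k < 2 then 1
  else ((2 : ℝ) ^ (k - 1) + 1) ^ (Real.exp (-(k : ℝ)) / (Nat.factorial (k - 1)))

open Real Finset

section ExponentialSeries

variable {𝕜 : Type*} [NormedField 𝕜] [NormedAlgebra ℚ 𝕜] [CompleteSpace 𝕜]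

lemma hasSum_natCast_mul_pow_div_factorial (x : 𝕜) :
    HasSum (fun n : ℕ => n * x ^ n / n.factorial) (x * NormedSpace.exp x) := by
  have : CharZero 𝕜 := algebraRat.charZero 𝕜
  refine (hasSum_nat_add_iff' 1).1 ?_
  simp only [sum_range_one, Nat.cast_zero, zero_mul, zero_div, sub_zero]
  refine ((NormedSpace.expSeries_div_hasSum_exp x).mul_left x).congr_fun fun n => ?_
  have hfact : (n.factorial : 𝕜) ≠ 0 := Nat.cast_ne_zero.2 n.factorial_ne_zero
  have hsucc : (n : 𝕜) + 1 ≠ 0 := n.cast_add_one_ne_zero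
  rw [Nat.factorial_succ]
  push_cast
  field_simp
  exact pow_succ' x n

lemma hasSum_natCast_add_one_mul_pow_div_factorial (x : 𝕜) :
    HasSum (fun n : ℕ => (n + 1) * x ^ n / n.factorial) ((x + 1) * NormedSpace.exp x) := by
  simpa only [add_mul, add_div, one_mul] using
    (hasSum_natCast_mul_pow_div_factorial x).add (NormedSpace.expSeries_div_hasSum_exp x)

end ExponentialSeries

section WeightedProducts

variable {ι : Type*} {w b d : ι → ℝ} {c S L : ℝ}

lemma hasProd_rpow_of_hasSum_mul_log (hb : ∀ i, 0 < b i)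
    (hL : HasSum (fun i => w i * log (b i)) L) : HasProd (fun i => b i ^ w i) (exp L) :=
  Real.hasProd_of_hasSum_log (fun i => rpow_pos_of_pos (hb i) _) <| by
    simpa only [log_rpow (hb _)] using hL

lemma mul_log_le_mul_mul_log (hw : ∀ i, 0 ≤ w i) (hb : ∀ i, 0 < b i) (hc : 0 < c)
    (hbc : ∀ i, w i ≠ 0 → b i ≤ c ^ d i) (i : ι) :
    w i * log (b i) ≤ d i * w i * log c := by
  rcases eq_or_ne (w i) 0 with hi | hi
  · simp [hi]
  · calc w i * log (b i) ≤ w i * log (c ^ d i) :=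
          mul_le_mul_of_nonneg_left (log_le_log (hb i) (hbc i hi)) (hw i)
      _ = d i * w i * log c := by rw [log_rpow hc]; ring

lemma summable_mul_log_of_le_rpow (hw : ∀ i, 0 ≤ w i) (hb : ∀ i, 1 ≤ b i) (hc : 0 < c)
    (hbc : ∀ i, w i ≠ 0 → b i ≤ c ^ d i) (hS : Summable fun i => d i * w i) :
    Summable fun i => w i * log (b i) :=
  Summable.of_nonneg_of_le (fun i => mul_nonneg (hw i) (log_nonneg (hb i)))
    (mul_log_le_mul_mul_log hw (fun i => one_pos.trans_le (hb i)) hc hbc) (hS.mul_right (log c))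

lemma rpow_neg_mul_tprod_rpow_le_exp (hw : ∀ i, 0 ≤ w i) (hb : ∀ i, 0 < b i) (hc : 0 < c)
    (hbc : ∀ i, w i ≠ 0 → b i ≤ c ^ d i) (hS : HasSum (fun i => d i * w i) S)
    (hL : HasSum (fun i => w i * log (b i)) L) (s : Finset ι) :
    c ^ (-S) * ∏' i, b i ^ w i ≤ exp (-∑ i ∈ s, w i * log (c ^ d i / b i)) := by
  have hpartial : ∑ i ∈ s, w i * log (c ^ d i / b i) ≤ S * log c - L :=
    calc ∑ i ∈ s, w i * log (c ^ d i / b i)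
        = ∑ i ∈ s, (d i * w i * log c - w i * log (b i)) := by
          refine sum_congr rfl fun i _ => ?_
          rw [log_div (rpow_pos_of_pos hc _).ne' (hb i).ne', log_rpow hc]
          ring
      _ ≤ S * log c - L :=
          sum_le_hasSum s (fun i _ => sub_nonneg.2 (mul_log_le_mul_mul_log hw hb hc hbc i))
            ((hS.mul_right (log c)).sub hL)
  rw [(hasProd_rpow_of_hasSum_mul_log hb hL).tprod_eq, rpow_def_of_pos hc, ← exp_add, exp_le_exp]
  linarith

end WeightedProducts

section LogBounds

variable {y : ℝ}

lemma one_add_div_one_sub_sub_one_div_add_one (hy : y + 1 ≠ 0) :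
    (1 + (y - 1) / (y + 1)) / (1 - (y - 1) / (y + 1)) = y := by
  field_simp
  ring

lemma two_mul_sum_range_le_log (hy : 1 ≤ y) (n : ℕ) :
    2 * ∑ i ∈ range n, ((y - 1) / (y + 1)) ^ (2 * i + 1) / (2 * i + 1) ≤ log y := by
  have h := sum_range_le_log_div (x := (y - 1) / (y + 1))
    (div_nonneg (by linarith) (by linarith)) ((div_lt_one (by linarith)).2 (by linarith)) n
  rw [one_add_div_one_sub_sub_one_div_add_one (by positivity)] at h
  linarith

lemma log_le_two_mul_sum_range_add (hy : 1 ≤ y) (n : ℕ) :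
    log y ≤ 2 * (∑ i ∈ range n, ((y - 1) / (y + 1)) ^ (2 * i + 1) / (2 * i + 1) +
      ((y - 1) / (y + 1)) ^ (2 * n + 1) / (1 - ((y - 1) / (y + 1)) ^ 2)) := by
  have h := log_div_le_sum_range_add (x := (y - 1) / (y + 1))
    (div_nonneg (by linarith) (by linarith)) ((div_lt_one (by linarith)).2 (by linarith)) n
  rw [one_add_div_one_sub_sub_one_div_add_one (by positivity)] at h
  linarith

end LogBounds

/-- The exponent `e^{-k}/(k-1)!` of the `k`-th factor, set to `0` for `k < 2` so that sums and
products over `k ≥ 2` become sums and products over `ℕ`. -/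
noncomputable def starWeight (k : ℕ) : ℝ :=
  if k < 2 then 0 else exp (-(k : ℝ)) / (k - 1).factorial

lemma starWeight_of_two_le {k : ℕ} (hk : 2 ≤ k) :
    starWeight k = exp (-1) ^ k / (k - 1).factorial := by
  rw [starWeight, if_neg hk.not_gt, ← exp_nat_mul, mul_neg_one]

lemma starWeight_nonneg (k : ℕ) : 0 ≤ starWeight k := by
  unfold starWeight
  split_ifs <;> positivity

lemma two_le_of_starWeight_ne_zero {k : ℕ} (hk : starWeight k ≠ 0) : 2 ≤ k := by
  by_contra! h
  exact hk (if_pos h)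

lemma starFactor_eq_rpow_starWeight (k : ℕ) :
    starFactor k = ((2 : ℝ) ^ (k - 1) + 1) ^ starWeight k := by
  unfold starFactor starWeight
  split_ifs
  · rw [rpow_zero]
  · rfl

lemma hasSum_natCast_mul_starWeight :
    HasSum (fun k : ℕ => k * starWeight k)
      (exp ((exp 1)⁻¹ - 1) + exp ((exp 1)⁻¹ - 2) - exp (-1)) := by
  have hseries : HasSum (fun n : ℕ => (n + 1) * exp (-1) ^ n / n.factorial)
      ((exp (-1) + 1) * exp (exp (-1))) := by
    simpa only [← exp_eq_exp_ℝ] using hasSum_natCast_add_one_mul_pow_div_factorial (exp (-1))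
  have hvalue : exp ((exp 1)⁻¹ - 1) + exp ((exp 1)⁻¹ - 2) - exp (-1) =
      exp (-1) * ((exp (-1) + 1) * exp (exp (-1)) - 1) := by
    have hsq : exp ((exp 1)⁻¹ - 2) = exp (-1) * exp (-1) * exp (exp (-1)) := by
      rw [← exp_neg, ← exp_add, ← exp_add]; ring_nf
    have hone : exp ((exp 1)⁻¹ - 1) = exp (-1) * exp (exp (-1)) := by
      rw [← exp_neg, ← exp_add]; ring_nf
    rw [hsq, hone]
    ring
  rw [hvalue, ← hasSum_nat_add_iff' 2]
  have htail := ((hasSum_nat_add_iff' 1).2 hseries).mul_left (exp (-1))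
  simp only [sum_range_one, Nat.cast_zero, zero_add, pow_zero, Nat.factorial_zero, Nat.cast_one,
    div_one, mul_one] at htail
  have hhead : ∑ k ∈ range 2, k * starWeight k = 0 := by simp [sum_range_succ, starWeight]
  rw [hhead, sub_zero]
  refine htail.congr_fun fun n => ?_
  rw [starWeight_of_two_le (Nat.le_add_left 2 n), Nat.add_sub_assoc one_le_two]
  push_cast
  ring

lemma two_pow_sub_one_add_one_le_two_pow {k : ℕ} (hk : 1 ≤ k) :
    (2 : ℝ) ^ (k - 1) + 1 ≤ 2 ^ k := by
  obtain ⟨m, rfl⟩ := Nat.exists_eq_add_of_le' hk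
  have : (1 : ℝ) ≤ 2 ^ m := one_le_pow₀ one_le_two
  rw [Nat.add_sub_cancel, pow_succ]
  linarith

lemma two_pow_sub_one_add_one_le_rpow_of_starWeight_ne_zero (k : ℕ) (hk : starWeight k ≠ 0) :
    (2 : ℝ) ^ (k - 1) + 1 ≤ 2 ^ (k : ℝ) := by
  rw [rpow_natCast]
  exact two_pow_sub_one_add_one_le_two_pow (one_le_two.trans (two_le_of_starWeight_ne_zero hk))

lemma summable_starWeight_mul_log :
    Summable fun k => starWeight k * log (2 ^ (k - 1) + 1) :=
  summable_mul_log_of_le_rpow starWeight_nonneg (fun k => le_add_of_nonneg_left (by positivity))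
    two_pos two_pow_sub_one_add_one_le_rpow_of_starWeight_ne_zero
    hasSum_natCast_mul_starWeight.summable

lemma multipliable_starFactor : Multipliable starFactor := by
  simp_rw [funext starFactor_eq_rpow_starWeight]
  exact (hasProd_rpow_of_hasSum_mul_log (fun k => by positivity)
    summable_starWeight_mul_log.hasSum).multipliable

lemma two_rpow_mul_tprod_starFactor_le (s : Finset ℕ) :
    (2 : ℝ) ^ (1 + exp (-1) - exp ((exp 1)⁻¹ - 1) - exp ((exp 1)⁻¹ - 2)) * ∏' k, starFactor k ≤
      2 * exp (-∑ k ∈ s, starWeight k * log (2 ^ k / (2 ^ (k - 1) + 1))) := by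
  have hbound := rpow_neg_mul_tprod_rpow_le_exp starWeight_nonneg (fun k => by positivity)
    two_pos two_pow_sub_one_add_one_le_rpow_of_starWeight_ne_zero hasSum_natCast_mul_starWeight
    summable_starWeight_mul_log.hasSum s
  simp only [rpow_natCast, ← starFactor_eq_rpow_starWeight] at hbound
  have hexponent : 1 + exp (-1) - exp ((exp 1)⁻¹ - 1) - exp ((exp 1)⁻¹ - 2) =
      1 + -(exp ((exp 1)⁻¹ - 1) + exp ((exp 1)⁻¹ - 2) - exp (-1)) := by
    ring
  rw [hexponent, rpow_add two_pos, rpow_one, mul_assoc]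
  exact mul_le_mul_of_nonneg_left hbound two_pos.le

lemma pow_div_factorial_mul_sum_range_le_starWeight_mul_log {r : ℝ} (hr₀ : 0 ≤ r)
    (hr : r ≤ exp (-1)) {k : ℕ} (hk : 2 ≤ k) (n : ℕ) :
    r ^ k / (k - 1).factorial * (2 * ∑ i ∈ range n,
        (((2 : ℝ) ^ (k - 1) - 1) / (3 * 2 ^ (k - 1) + 1)) ^ (2 * i + 1) / (2 * i + 1)) ≤
      starWeight k * log (2 ^ k / (2 ^ (k - 1) + 1)) := by
  have hone : (1 : ℝ) ≤ 2 ^ k / (2 ^ (k - 1) + 1) :=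
    (one_le_div (by positivity)).2 (two_pow_sub_one_add_one_le_two_pow (one_le_two.trans hk))
  -- The argument of the `artanh` series of `log y` is `(y - 1) / (y + 1)`.
  have harg : ((2 : ℝ) ^ (k - 1) - 1) / (3 * 2 ^ (k - 1) + 1) =
      (2 ^ k / (2 ^ (k - 1) + 1) - 1) / (2 ^ k / (2 ^ (k - 1) + 1) + 1) := by
    obtain ⟨m, rfl⟩ := Nat.exists_eq_add_of_le' (one_le_two.trans hk)
    rw [Nat.add_sub_cancel, pow_succ]
    field_simp
    ring
  rw [starWeight_of_two_le hk, harg]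
  exact mul_le_mul (by gcongr) (two_mul_sum_range_le_log hone n) (by positivity) (by positivity)

lemma log_two_div_lt_sum_starWeight_mul_log :
    log (2 / 1.89756) < ∑ k ∈ Icc 2 6, starWeight k * log (2 ^ k / (2 ^ (k - 1) + 1)) := by
  have hr : 0.3678794 ≤ exp (-1) := exp_neg_one_gt_d9.le.trans' (by norm_num)
  calc log (2 / 1.89756) ≤ 0.0525784 :=
        (log_le_two_mul_sum_range_add (by norm_num) 2).trans (by norm_num [sum_range_succ])
    _ < ∑ k ∈ Icc 2 6, (0.3678794 : ℝ) ^ k / (k - 1).factorial * (2 * ∑ i ∈ range 3,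
          (((2 : ℝ) ^ (k - 1) - 1) / (3 * 2 ^ (k - 1) + 1)) ^ (2 * i + 1) / (2 * i + 1)) := by
        norm_num [sum_Icc_succ_top, sum_range_succ, Nat.factorial]
    _ ≤ _ := sum_le_sum fun k hk =>
        pow_div_factorial_mul_sum_range_le_starWeight_mul_log (by norm_num) hr (mem_Icc.1 hk).1 3

/-- The infinite product `∏_{k≥2} (2^{k-1}+1)^{e^{-k}/(k-1)!}` converges,
`2^{1 + e^{-1} - e^{1/e-1} - e^{1/e-2}} ∏_{k≥2} (2^{k-1}+1)^{e^{-k}/(k-1)!} < 1.89756`,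
and `∑_{k≥2} k e^{-k}/(k-1)! = e^{1/e-1} + e^{1/e-2} - e^{-1}`. -/
theorem star_product_upper_bound :
    Multipliable starFactor ∧
    (2 : ℝ) ^ (1 + Real.exp (-1) - Real.exp ((Real.exp 1)⁻¹ - 1)
        - Real.exp ((Real.exp 1)⁻¹ - 2)) * (∏' k : ℕ, starFactor k) < 1.89756 ∧
    HasSum (fun k : ℕ =>
        if k < 2 then 0 else (k : ℝ) * Real.exp (-(k : ℝ)) / (Nat.factorial (k - 1)))
      (Real.exp ((Real.exp 1)⁻¹ - 1) + Real.exp ((Real.exp 1)⁻¹ - 2) - Real.exp (-1)) := by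
  refine ⟨multipliable_starFactor, ?_, hasSum_natCast_mul_starWeight.congr_fun fun k => ?_⟩
  · calc _ ≤ 2 * exp (-∑ k ∈ Icc 2 6, starWeight k * log (2 ^ k / (2 ^ (k - 1) + 1))) :=
          two_rpow_mul_tprod_starFactor_le (Icc 2 6)
      _ < 2 * exp (-log (2 / 1.89756)) := by gcongr; exact log_two_div_lt_sum_starWeight_mul_log
      _ = 1.89756 := by rw [exp_neg, exp_log (by norm_num)]; norm_num
  · simp only [starWeight, mul_ite, mul_zero, mul_div_assoc]
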